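/- Let α > 1, Λ ∈ ℂ \ [0,∞), and ε > 0. Then there exist constants C, C′ > 0 with the following property. Let w : ℤ → ℂ satisfy ∑_{n∈ℤ} (1+n²)^{−1/2} |w_n|² < ∞, and define f_n := 2√(n²−Λ)·w_n − α·( (n+1/2)·w_{n+1} + (n−1/2)·w_{n−1} ) for n ∈ ℤ. If ∑_{n∈ℤ} (1+n²)^{1/2} |f_n|² < ∞, then ∑_{n∈ℤ} (1+n²)^{−ε} |w_n|² < ∞ and ( ∑_{n∈ℤ} (1+n²)^{−ε} |w_n|² )^{1/2} ≤ C ( ∑_{n∈ℤ} (1+n²)^{1/2} |f_n|² )^{1/2} + C′ ( ∑_{n∈ℤ} (1+n²)^{−1/2} |w_n|² )^{1/2}. -/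

import Mathlib

open Complex

/-!
On the positive half-line put `v n = √n * w n`. Dividing the equation at `n` by `√n` turns it into
`v (n + 1) - 2 * α⁻¹ * v n + v (n - 1) = r n`, where `r n` is `O(n⁻²)` times the neighbouring values
of `v` plus a multiple of `f n / √n`. As `|α⁻¹| < 1`, the characteristic roots of the left-hand side
are two distinct points of the unit circle, so its solutions neither grow nor decay; both
perturbations are summable, the second one by Cauchy-Schwarz, and the discrete Grönwall inequality
gives `w n = O(n ^ (-1 / 2))` with a constant controlled by `f` and two values of `w`. Reflecting
`n ↦ -n` replaces `α` by `-α`, which settles the negative half-line.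
-/

section Recurrence

variable {𝕜 E : Type*} [NormedField 𝕜] [SeminormedAddCommGroup E] [NormedSpace 𝕜 E]

/-- The energy of a sequence `v` relative to a second-order recurrence with characteristic roots `z`
and `y`. For an exact solution the two differences are geometric sequences of ratio `y` and `z`, so
that for `z` and `y` in the closed unit disc only the defect of `v` can make the energy grow. -/
def recurrenceEnergy (z y : 𝕜) (v : ℕ → E) (n : ℕ) : ℝ :=
  ‖v (n + 1) - z • v n‖ + ‖v (n + 1) - y • v n‖

lemma recurrenceEnergy_nonneg (z y : 𝕜) (v : ℕ → E) (n : ℕ) : 0 ≤ recurrenceEnergy z y v n :=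
  add_nonneg (norm_nonneg _) (norm_nonneg _)

lemma norm_sub_mul_norm_le_recurrenceEnergy (z y : 𝕜) (v : ℕ → E) (n : ℕ) :
    ‖z - y‖ * ‖v n‖ ≤ recurrenceEnergy z y v n := by
  have h : (z - y) • v n = (v (n + 1) - y • v n) - (v (n + 1) - z • v n) := by module
  rw [← norm_smul, h, recurrenceEnergy, add_comm ‖_‖]
  exact norm_sub_le _ _

lemma norm_smul_le_of_norm_le_one {z : 𝕜} (hz : ‖z‖ ≤ 1) (x : E) : ‖z • x‖ ≤ ‖x‖ := by
  simpa [norm_smul] using mul_le_mul_of_nonneg_right hz (norm_nonneg x)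

variable {z y : 𝕜} (hz : ‖z‖ ≤ 1) (hy : ‖y‖ ≤ 1)

include hz hy

lemma norm_sub_mul_norm_succ_le_recurrenceEnergy (v : ℕ → E) (n : ℕ) :
    ‖z - y‖ * ‖v (n + 1)‖ ≤ recurrenceEnergy z y v n := by
  have h : (z - y) • v (n + 1) = z • (v (n + 1) - y • v n) - y • (v (n + 1) - z • v n) := by
    module
  rw [← norm_smul, h, recurrenceEnergy, add_comm ‖_‖]
  exact (norm_sub_le _ _).trans
    (add_le_add (norm_smul_le_of_norm_le_one hz _) (norm_smul_le_of_norm_le_one hy _))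

lemma recurrenceEnergy_succ_le (v : ℕ → E) (n : ℕ) :
    recurrenceEnergy z y v (n + 1) ≤ recurrenceEnergy z y v n
      + 2 * ‖v (n + 2) - (z + y) • v (n + 1) + (z * y) • v n‖ := by
  set d := v (n + 2) - (z + y) • v (n + 1) + (z * y) • v n with hd
  have hz' : ‖v (n + 2) - z • v (n + 1)‖ ≤ ‖v (n + 1) - z • v n‖ + ‖d‖ := by
    have h : v (n + 2) - z • v (n + 1) = y • (v (n + 1) - z • v n) + d := by rw [hd]; module
    rw [h]
    exact (norm_add_le _ _).trans (add_le_add_left (norm_smul_le_of_norm_le_one hy _) _)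
  have hy' : ‖v (n + 2) - y • v (n + 1)‖ ≤ ‖v (n + 1) - y • v n‖ + ‖d‖ := by
    have h : v (n + 2) - y • v (n + 1) = z • (v (n + 1) - y • v n) + d := by rw [hd]; module
    rw [h]
    exact (norm_add_le _ _).trans (add_le_add_left (norm_smul_le_of_norm_le_one hz _) _)
  simp only [recurrenceEnergy]
  linarith

lemma recurrenceEnergy_zero_le (v : ℕ → E) :
    recurrenceEnergy z y v 0 ≤ 2 * (‖v 0‖ + ‖v 1‖) := by
  have h₁ := (norm_sub_le (v 1) (z • v 0)).trans
    (add_le_add_right (norm_smul_le_of_norm_le_one hz _) _)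
  have h₂ := (norm_sub_le (v 1) (y • v 0)).trans
    (add_le_add_right (norm_smul_le_of_norm_le_one hy _) _)
  simp only [recurrenceEnergy, zero_add]
  linarith

theorem norm_le_of_perturbed_recurrence (hzy : z ≠ y) {v : ℕ → E} {a b : ℕ → ℝ}
    (ha₀ : ∀ n, 0 ≤ a n) (hb₀ : ∀ n, 0 ≤ b n) (ha : Summable a) (hb : Summable b)
    (hv : ∀ n, ‖v (n + 2) - (z + y) • v (n + 1) + (z * y) • v n‖
      ≤ a n * (‖v (n + 1)‖ + ‖v n‖) + b n) (n : ℕ) :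
    ‖v n‖ ≤ 2 * Real.exp (4 / ‖z - y‖ * ∑' k, a k) / ‖z - y‖
      * (‖v 0‖ + ‖v 1‖ + ∑' k, b k) := by
  have hd : 0 < ‖z - y‖ := norm_pos_iff.2 (sub_ne_zero.2 hzy)
  have growth (k : ℕ) : recurrenceEnergy z y v (k + 1)
      ≤ (1 + 4 / ‖z - y‖ * a k) * recurrenceEnergy z y v k + 2 * b k := by
    have hsum : ‖v (k + 1)‖ + ‖v k‖ ≤ 2 * recurrenceEnergy z y v k / ‖z - y‖ := by
      rw [le_div_iff₀ hd]
      linarith [norm_sub_mul_norm_le_recurrenceEnergy z y v k,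
        norm_sub_mul_norm_succ_le_recurrenceEnergy hz hy v k]
    calc recurrenceEnergy z y v (k + 1)
        ≤ recurrenceEnergy z y v k + 2 * (a k * (‖v (k + 1)‖ + ‖v k‖) + b k) := by
          linarith [recurrenceEnergy_succ_le hz hy v k, hv k]
      _ ≤ recurrenceEnergy z y v k
          + 2 * (a k * (2 * recurrenceEnergy z y v k / ‖z - y‖) + b k) := by
          gcongr
          exact ha₀ k
      _ = _ := by ring
  have gronwall := discrete_gronwall (n₀ := 0) (recurrenceEnergy_nonneg z y v 0)
    (fun k _ ↦ growth k) (fun k _ ↦ mul_nonneg (by positivity) (ha₀ k))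
    (fun k _ ↦ mul_nonneg zero_le_two (hb₀ k)) n.zero_le
  rw [← Finset.mul_sum, ← Finset.mul_sum] at gronwall
  have hb_tsum : 0 ≤ ∑' k, b k := tsum_nonneg hb₀
  have energy_le : recurrenceEnergy z y v n ≤
      2 * (‖v 0‖ + ‖v 1‖ + ∑' k, b k) * Real.exp (4 / ‖z - y‖ * ∑' k, a k) := by
    refine gronwall.trans (mul_le_mul ?_ ?_ (by positivity) (by positivity))
    · linarith [recurrenceEnergy_zero_le hz hy v,
        hb.sum_le_tsum (Finset.Ico 0 n) fun k _ ↦ hb₀ k]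
    · gcongr
      exact ha.sum_le_tsum _ fun k _ ↦ ha₀ k
  rw [div_mul_eq_mul_div, le_div_iff₀ hd]
  linarith [norm_sub_mul_norm_le_recurrenceEnergy z y v n]

end Recurrence

lemma exists_norm_eq_one_add_eq_mul_eq_one {c : ℝ} (hc : |c| < 1) :
    ∃ z y : ℂ, ‖z‖ = 1 ∧ ‖y‖ = 1 ∧ z ≠ y ∧ z + y = 2 * c ∧ z * y = 1 := by
  have hcos : Complex.cos (Real.arccos c) = c := by
    rw [← ofReal_cos, Real.cos_arccos (abs_le.1 hc.le).1 (abs_le.1 hc.le).2]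
  have hnorm (θ : ℝ) : ‖exp (θ * I)‖ = 1 := norm_exp_ofReal_mul_I θ
  have hadd : exp (Real.arccos c * I) + exp (-Real.arccos c * I) = 2 * c := by
    rw [← hcos, two_cos]
  refine ⟨exp (Real.arccos c * I), exp (-Real.arccos c * I), hnorm _, ?_, fun h ↦ ?_, hadd, ?_⟩
  · exact_mod_cast hnorm (-Real.arccos c)
  · have hz : exp (Real.arccos c * I) = c := by rw [← h] at hadd; linear_combination hadd / 2
    have := hnorm (Real.arccos c)
    rw [hz, norm_real, Real.norm_eq_abs] at this
    exact hc.ne this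
  · rw [← exp_add]
    simp

section Sobolev

lemma summable_one_add_sq_rpow {r : ℝ} (hr : r < -(1 / 2)) :
    Summable fun n : ℤ ↦ (1 + (n : ℝ) ^ 2) ^ r := by
  refine Summable.of_norm_bounded_eventually
    (Real.summable_abs_int_rpow (b := -2 * r) (by linarith)) ?_
  filter_upwards [(Set.finite_singleton (0 : ℤ)).compl_mem_cofinite] with n hn
  have hn' : 0 < |(n : ℝ)| := abs_pos.2 (by exact_mod_cast hn)
  rw [Real.norm_of_nonneg (by positivity)]
  calc (1 + (n : ℝ) ^ 2) ^ r ≤ (|(n : ℝ)| ^ 2) ^ r :=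
        Real.rpow_le_rpow_of_nonpos (by positivity) (by rw [sq_abs]; linarith) (by linarith)
    _ = |(n : ℝ)| ^ (-(-2 * r)) := by
        rw [← Real.rpow_natCast_mul hn'.le]
        congr 1
        push_cast
        ring

lemma one_add_sq_rpow_quarter_le {n : ℤ} (hn : 0 < n) :
    (1 + (n : ℝ) ^ 2) ^ (1 / 4 : ℝ) ≤ 2 * √(n : ℝ) := by
  have hn' : (1 : ℝ) ≤ n := by exact_mod_cast hn
  rw [← pow_le_pow_iff_left₀ (by positivity) (by positivity) four_ne_zero,
    ← Real.rpow_mul_natCast (by positivity)]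
  calc (1 + (n : ℝ) ^ 2) ^ (1 / 4 * (4 : ℕ) : ℝ) = 1 + (n : ℝ) ^ 2 := by norm_num
    _ ≤ 16 * (√(n : ℝ) ^ 2) ^ 2 := by rw [Real.sq_sqrt (by positivity)]; nlinarith
    _ = _ := by ring

variable {E : Type*} [SeminormedAddCommGroup E] {c : ℤ → E} {s t : ℝ}

/-- Membership of the distribution with Fourier coefficients `c` in the Sobolev space of order `s`
on the circle. -/
def MemCircleSobolev (s : ℝ) (c : ℤ → E) : Prop :=
  Summable fun n : ℤ ↦ (1 + (n : ℝ) ^ 2) ^ s * ‖c n‖ ^ 2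

/-- The norm of order `s` of the distribution on the circle with Fourier coefficients `c`. It takes
the junk value `0` unless `MemCircleSobolev s c`. -/
noncomputable def circleSobolevNorm (s : ℝ) (c : ℤ → E) : ℝ :=
  √(∑' n : ℤ, (1 + (n : ℝ) ^ 2) ^ s * ‖c n‖ ^ 2)

lemma circleSobolevNorm_nonneg (s : ℝ) (c : ℤ → E) : 0 ≤ circleSobolevNorm s c :=
  Real.sqrt_nonneg _

lemma MemCircleSobolev.comp_neg (hc : MemCircleSobolev s c) :
    MemCircleSobolev s fun n ↦ c (-n) := by
  simpa [MemCircleSobolev, Function.comp_def] using (Equiv.neg ℤ).summable_iff.2 hc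

lemma circleSobolevNorm_comp_neg (s : ℝ) (c : ℤ → E) :
    circleSobolevNorm s (fun n ↦ c (-n)) = circleSobolevNorm s c := by
  have h := (Equiv.neg ℤ).tsum_eq fun n : ℤ ↦ (1 + (n : ℝ) ^ 2) ^ s * ‖c n‖ ^ 2
  simp only [Equiv.neg_apply, Int.cast_neg, neg_sq] at h
  rw [circleSobolevNorm, circleSobolevNorm, h]

lemma MemCircleSobolev.sum_le_sq_norm (hc : MemCircleSobolev s c) (S : Finset ℤ) :
    ∑ n ∈ S, (1 + (n : ℝ) ^ 2) ^ s * ‖c n‖ ^ 2 ≤ circleSobolevNorm s c ^ 2 := by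
  rw [circleSobolevNorm, Real.sq_sqrt (tsum_nonneg fun n ↦ by positivity)]
  exact hc.sum_le_tsum S fun n _ ↦ by positivity

lemma MemCircleSobolev.norm_apply_le (hc : MemCircleSobolev s c) (n : ℤ) :
    ‖c n‖ ≤ (1 + (n : ℝ) ^ 2) ^ (-s / 2) * circleSobolevNorm s c := by
  have hpos : (0 : ℝ) < 1 + (n : ℝ) ^ 2 := by positivity
  have hterm := hc.sum_le_sq_norm {n}
  rw [Finset.sum_singleton] at hterm
  refine le_of_sq_le_sq ?_ (mul_nonneg (by positivity) (circleSobolevNorm_nonneg s c))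
  calc ‖c n‖ ^ 2
      = ((1 + (n : ℝ) ^ 2) ^ (-s / 2)) ^ 2 * ((1 + (n : ℝ) ^ 2) ^ s * ‖c n‖ ^ 2) := by
        rw [← Real.rpow_mul_natCast hpos.le, ← mul_assoc, ← Real.rpow_add hpos]
        simp
    _ ≤ ((1 + (n : ℝ) ^ 2) ^ (-s / 2)) ^ 2 * circleSobolevNorm s c ^ 2 := by gcongr
    _ = _ := by ring

lemma MemCircleSobolev.sum_norm_le (hc : MemCircleSobolev s c) (S : Finset ℤ) :
    ∑ n ∈ S, ‖c n‖ ≤ (∑ n ∈ S, (1 + (n : ℝ) ^ 2) ^ (-s / 2)) * circleSobolevNorm s c := by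
  rw [Finset.sum_mul]
  exact Finset.sum_le_sum fun n _ ↦ hc.norm_apply_le n

lemma MemCircleSobolev.sum_rpow_mul_norm_le (hc : MemCircleSobolev s c)
    (hst : 2 * t - s < -(1 / 2)) (S : Finset ℤ) :
    ∑ n ∈ S, (1 + (n : ℝ) ^ 2) ^ t * ‖c n‖
      ≤ √(∑' n : ℤ, (1 + (n : ℝ) ^ 2) ^ (2 * t - s)) * circleSobolevNorm s c := by
  have split_weight (n : ℤ) : (1 + (n : ℝ) ^ 2) ^ t * ‖c n‖ =
      (1 + (n : ℝ) ^ 2) ^ (t - s / 2) * ((1 + (n : ℝ) ^ 2) ^ (s / 2) * ‖c n‖) := by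
    rw [← mul_assoc, ← Real.rpow_add (by positivity), sub_add_cancel]
  have sq_left (n : ℤ) :
      ((1 + (n : ℝ) ^ 2) ^ (t - s / 2)) ^ 2 = (1 + (n : ℝ) ^ 2) ^ (2 * t - s) := by
    rw [← Real.rpow_mul_natCast (by positivity)]
    congr 1
    push_cast
    ring
  have sq_right (n : ℤ) :
      ((1 + (n : ℝ) ^ 2) ^ (s / 2) * ‖c n‖) ^ 2 = (1 + (n : ℝ) ^ 2) ^ s * ‖c n‖ ^ 2 := by
    rw [mul_pow, ← Real.rpow_mul_natCast (by positivity), Nat.cast_ofNat,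
      div_mul_cancel₀ s two_ne_zero]
  simp only [split_weight]
  refine (Real.sum_mul_le_sqrt_mul_sqrt S _ _).trans ?_
  simp only [sq_left, sq_right]
  gcongr
  · exact (summable_one_add_sq_rpow hst).sum_le_tsum S fun n _ ↦ by positivity
  · exact Real.sqrt_le_iff.2 ⟨circleSobolevNorm_nonneg s c, hc.sum_le_sq_norm S⟩

lemma MemCircleSobolev.summable_rpow_mul_norm (hc : MemCircleSobolev s c)
    (hst : 2 * t - s < -(1 / 2)) : Summable fun n : ℤ ↦ (1 + (n : ℝ) ^ 2) ^ t * ‖c n‖ :=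
  summable_of_sum_le (fun n ↦ by positivity) (hc.sum_rpow_mul_norm_le hst)

lemma MemCircleSobolev.tsum_rpow_mul_norm_le (hc : MemCircleSobolev s c)
    (hst : 2 * t - s < -(1 / 2)) :
    ∑' n : ℤ, (1 + (n : ℝ) ^ 2) ^ t * ‖c n‖
      ≤ √(∑' n : ℤ, (1 + (n : ℝ) ^ 2) ^ (2 * t - s)) * circleSobolevNorm s c :=
  (hc.summable_rpow_mul_norm hst).tsum_le_of_sum_le (hc.sum_rpow_mul_norm_le hst)

section HalfLine

lemma norm_div_sqrt_le {n : ℤ} (hn : 0 < n) (x : E) :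
    ‖x‖ / √(n : ℝ) ≤ 2 * ((1 + (n : ℝ) ^ 2) ^ (-(1 / 4) : ℝ) * ‖x‖) := by
  have hn' : 0 < √(n : ℝ) := Real.sqrt_pos.2 (by exact_mod_cast hn)
  have hinv : (√(n : ℝ))⁻¹ ≤ 2 * (1 + (n : ℝ) ^ 2) ^ (-(1 / 4) : ℝ) := by
    rw [Real.rpow_neg (by positivity), ← div_eq_mul_inv, inv_le_comm₀ hn' (by positivity), inv_div,
      div_le_iff₀' two_pos]
    exact one_add_sq_rpow_quarter_le hn
  rw [div_eq_inv_mul, ← mul_assoc]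
  gcongr

lemma MemCircleSobolev.summable_norm_div_sqrt (hc : MemCircleSobolev s c) (hs : 0 < s) :
    Summable fun k : ℕ ↦ ‖c (k + 2)‖ / √((k + 2 : ℤ) : ℝ) :=
  .of_nonneg_of_le (fun k ↦ by positivity) (fun k ↦ norm_div_sqrt_le (by omega) _)
    (((hc.summable_rpow_mul_norm (by linarith)).comp_injective
      ((add_left_injective (2 : ℤ)).comp Nat.cast_injective)).mul_left 2)

lemma MemCircleSobolev.tsum_norm_div_sqrt_le (hc : MemCircleSobolev s c) (hs : 0 < s) :
    ∑' k : ℕ, ‖c (k + 2)‖ / √((k + 2 : ℤ) : ℝ)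
      ≤ 2 * √(∑' n : ℤ, (1 + (n : ℝ) ^ 2) ^ (2 * (-(1 / 4)) - s)) * circleSobolevNorm s c := by
  have hexp : 2 * (-(1 / 4)) - s < -(1 / 2) := by linarith
  have hinj : Function.Injective fun k : ℕ ↦ (k : ℤ) + 2 :=
    (add_left_injective _).comp Nat.cast_injective
  have hsum := hc.summable_rpow_mul_norm hexp
  refine ((hc.summable_norm_div_sqrt hs).tsum_le_tsum (fun k ↦ norm_div_sqrt_le (by omega) _)
    ((hsum.comp_injective hinj).mul_left 2)).trans ?_
  rw [tsum_mul_left, mul_assoc]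
  gcongr
  exact (tsum_comp_le_tsum_of_inj hsum (fun n ↦ by positivity) hinj).trans
    (hc.tsum_rpow_mul_norm_le hexp)

end HalfLine

section Decay

variable {M : ℝ} (hc : ∀ n : ℤ, (1 + (n : ℝ) ^ 2) ^ t * ‖c n‖ ≤ M) (hst : s - 2 * t < -(1 / 2))

include hc in
lemma rpow_mul_sq_norm_le_of_decay (s : ℝ) (n : ℤ) :
    (1 + (n : ℝ) ^ 2) ^ s * ‖c n‖ ^ 2 ≤ M ^ 2 * (1 + (n : ℝ) ^ 2) ^ (s - 2 * t) := by
  have hpos : (0 : ℝ) < 1 + (n : ℝ) ^ 2 := by positivity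
  calc (1 + (n : ℝ) ^ 2) ^ s * ‖c n‖ ^ 2
      = ((1 + (n : ℝ) ^ 2) ^ t * ‖c n‖) ^ 2 * (1 + (n : ℝ) ^ 2) ^ (s - 2 * t) := by
        have h : (1 + (n : ℝ) ^ 2) ^ s
            = ((1 + (n : ℝ) ^ 2) ^ t) ^ 2 * (1 + (n : ℝ) ^ 2) ^ (s - 2 * t) := by
          rw [← Real.rpow_mul_natCast hpos.le, ← Real.rpow_add hpos]
          congr 1
          push_cast
          ring
        rw [h]
        ring
    _ ≤ _ := by
        gcongr
        exact hc n

include hc hst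

lemma memCircleSobolev_of_decay : MemCircleSobolev s c :=
  .of_nonneg_of_le (fun n ↦ by positivity) (rpow_mul_sq_norm_le_of_decay hc s)
    ((summable_one_add_sq_rpow hst).mul_left _)

lemma circleSobolevNorm_le_of_decay :
    circleSobolevNorm s c ≤ √(∑' n : ℤ, (1 + (n : ℝ) ^ 2) ^ (s - 2 * t)) * M := by
  have hM : 0 ≤ M := (by positivity : (0 : ℝ) ≤ _).trans (hc 0)
  have hle := (memCircleSobolev_of_decay hc hst).tsum_le_tsum (rpow_mul_sq_norm_le_of_decay hc s)
    ((summable_one_add_sq_rpow hst).mul_left _)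
  rw [tsum_mul_left, mul_comm] at hle
  refine (Real.sqrt_le_sqrt hle).trans_eq ?_
  rw [Real.sqrt_mul' _ (sq_nonneg M), Real.sqrt_sq hM]

end Decay

end Sobolev

section Operator

variable {α : ℝ} {n : ℤ}

/-- The operator `2(𝒜 - Λ)^{1/2} + αℬ` acting on Fourier coefficients, where `𝒜 = -d²/dy²` and
`ℬu = i(u' cos y + (u cos y)')`. -/
noncomputable def degenerateOp (α : ℝ) (Λ : ℂ) (w : ℤ → ℂ) (n : ℤ) : ℂ :=
  2 * (((n : ℂ) ^ 2 - Λ) ^ ((1 : ℂ) / 2)) * w n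
    - (α : ℂ) * (((n : ℂ) + 1 / 2) * w (n + 1) + ((n : ℂ) - 1 / 2) * w (n - 1))

/-- The rescaling which turns the principal part of `degenerateOp` into a recurrence with constant
coefficients. It is meant for `n ≥ 0`: the square root of a negative number is `0`. -/
noncomputable def sqrtRescale (w : ℤ → ℂ) (n : ℤ) : ℂ := (√(n : ℝ) : ℂ) * w n

/-- The quotient of the arithmetic and the geometric mean of `x` and `x + 1`, which is what
`sqrtRescale` leaves of the coefficients of `ℬ`. -/
noncomputable def meanRatio (x : ℝ) : ℝ := (x + 1 / 2) / (√x * √(x + 1))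

lemma degenerateOp_comp_neg (α : ℝ) (Λ : ℂ) (w : ℤ → ℂ) :
    degenerateOp (-α) Λ (fun n ↦ w (-n)) = fun n ↦ degenerateOp α Λ w (-n) := by
  funext n
  have h₁ : -(n + 1) = -n - 1 := by ring
  have h₂ : -(n - 1) = -n + 1 := by ring
  simp only [degenerateOp, h₁, h₂]
  push_cast
  rw [neg_sq]
  ring

lemma norm_sq_sub_cpow_half_sub_le (Λ : ℂ) {x : ℝ} (hx : 0 < x) :
    ‖((x : ℂ) ^ 2 - Λ) ^ ((1 : ℂ) / 2) - x‖ ≤ ‖Λ‖ / x := by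
  set s := ((x : ℂ) ^ 2 - Λ) ^ ((1 : ℂ) / 2) with hs
  have s_sq : s ^ 2 = (x : ℂ) ^ 2 - Λ := by rw [hs, one_div, cpow_ofNat_inv_pow]
  have s_re : 0 ≤ s.re := by rw [hs, one_div, cpow_inv_two_re]; positivity
  have x_le : x ≤ ‖s + x‖ := by
    have := re_le_norm (s + x)
    rw [add_re, ofReal_re] at this
    linarith
  rw [le_div_iff₀ hx]
  calc ‖s - x‖ * x ≤ ‖s - x‖ * ‖s + x‖ := by gcongr
    _ = ‖Λ‖ := by
      rw [← norm_mul, ← norm_neg]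
      congr 1
      linear_combination -s_sq

lemma sq_meanRatio {x : ℝ} (hx : 0 < x) : meanRatio x ^ 2 = 1 + 1 / (4 * (x * (x + 1))) := by
  rw [meanRatio, div_pow, mul_pow, Real.sq_sqrt hx.le, Real.sq_sqrt (by positivity)]
  field_simp
  ring

lemma one_le_meanRatio {x : ℝ} (hx : 0 < x) : 1 ≤ meanRatio x := by
  have h₀ : 0 ≤ meanRatio x := by rw [meanRatio]; positivity
  rw [← one_le_sq_iff₀ h₀, sq_meanRatio hx, le_add_iff_nonneg_right]
  positivity

lemma meanRatio_le {x : ℝ} (hx : 0 < x) : meanRatio x ≤ 1 + 1 / (8 * (x * (x + 1))) := by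
  have h : 1 / (4 * (x * (x + 1))) = 2 * (1 / (8 * (x * (x + 1)))) := by field_simp; norm_num
  nlinarith [sq_meanRatio hx, one_le_meanRatio hx]

lemma norm_three_term_le {p q δ η : ℝ} {σ prev mid next g : ℂ} (hα : 1 ≤ |α|) (hp : 1 ≤ p)
    (hq : 1 ≤ q) (hpδ : p ≤ 1 + δ) (hqδ : q ≤ 1 + δ) (hσ : ‖σ - 1‖ ≤ η)
    (hg : g = 2 * σ * mid - α * (p * next + q * prev)) :
    ‖next - 2 * (α⁻¹ : ℝ) * mid + prev‖ ≤ 2 * (η + δ) * (‖mid‖ + ‖prev‖) + ‖g‖ := by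
  have hα₀ : (α : ℂ) ≠ 0 := ofReal_ne_zero.2 (abs_pos.1 (one_pos.trans_le hα))
  have hα_inv : ‖((α⁻¹ : ℝ) : ℂ)‖ ≤ 1 := by
    rw [norm_real, Real.norm_eq_abs, abs_inv]
    exact inv_le_one_of_one_le₀ hα
  have hη : 0 ≤ η := (norm_nonneg _).trans hσ
  have hδ : 0 ≤ δ := by linarith
  have hpq : ‖((p - q : ℝ) : ℂ)‖ ≤ δ := by
    rw [norm_real, Real.norm_eq_abs, abs_le]
    constructor <;> linarith
  have hσp : ‖σ - p‖ ≤ η + δ := by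
    have h : σ - p = (σ - 1) - ((p - 1 : ℝ) : ℂ) := by push_cast; ring
    rw [h]
    refine (norm_sub_le _ _).trans (add_le_add hσ ?_)
    rw [norm_real, Real.norm_of_nonneg (by linarith)]
    linarith
  set e := next - 2 * (α⁻¹ : ℝ) * mid + prev with he
  have key : (p : ℂ) * e = (α⁻¹ : ℝ) * (2 * ((σ - p) * mid)) + (p - q : ℝ) * prev
      - (α⁻¹ : ℝ) * g := by
    rw [he, hg]
    push_cast
    field_simp
    ring
  calc ‖e‖ ≤ ‖(p : ℂ) * e‖ := by
        rw [norm_mul, norm_real, Real.norm_of_nonneg (by linarith)]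
        exact le_mul_of_one_le_left (norm_nonneg e) hp
    _ ≤ ‖((α⁻¹ : ℝ) : ℂ)‖ * (2 * (‖σ - p‖ * ‖mid‖)) + ‖((p - q : ℝ) : ℂ)‖ * ‖prev‖
        + ‖((α⁻¹ : ℝ) : ℂ)‖ * ‖g‖ := by
        rw [key]
        refine (norm_sub_le _ _).trans (add_le_add ((norm_add_le _ _).trans_eq ?_) ?_) <;> simp
    _ ≤ 1 * (2 * ((η + δ) * ‖mid‖)) + δ * ‖prev‖ + 1 * ‖g‖ := by gcongr
    _ ≤ 2 * (η + δ) * (‖mid‖ + ‖prev‖) + ‖g‖ := by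
        nlinarith [mul_nonneg hη (norm_nonneg prev), mul_nonneg hδ (norm_nonneg prev)]

lemma degenerateOp_div_sqrt (α : ℝ) (Λ : ℂ) (w : ℤ → ℂ) (hn : 2 ≤ n) :
    degenerateOp α Λ w n / (√(n : ℝ) : ℂ)
      = 2 * (((n : ℂ) ^ 2 - Λ) ^ ((1 : ℂ) / 2) / n) * sqrtRescale w n
        - α * (meanRatio n * sqrtRescale w (n + 1)
          + meanRatio (n - 1) * sqrtRescale w (n - 1)) := by
  have hn' : (2 : ℝ) ≤ n := by exact_mod_cast hn
  have h₀ : (√(n : ℝ) : ℂ) ≠ 0 := ofReal_ne_zero.2 (Real.sqrt_pos.2 (by linarith)).ne'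
  have h₁ : (√((n : ℝ) + 1) : ℂ) ≠ 0 := ofReal_ne_zero.2 (Real.sqrt_pos.2 (by linarith)).ne'
  have h₂ : (√((n : ℝ) - 1) : ℂ) ≠ 0 := ofReal_ne_zero.2 (Real.sqrt_pos.2 (by linarith)).ne'
  have hsq : (n : ℂ) = (√(n : ℝ) : ℂ) ^ 2 := by
    exact_mod_cast (Real.sq_sqrt (by linarith : (0 : ℝ) ≤ n)).symm
  have symbol_term (s : ℂ) : s / n * sqrtRescale w n = s * w n / (√(n : ℝ) : ℂ) := by
    rw [sqrtRescale, hsq]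
    field_simp
  have upper_term : meanRatio n * sqrtRescale w (n + 1)
      = (n + 1 / 2) * w (n + 1) / (√(n : ℝ) : ℂ) := by
    rw [sqrtRescale, meanRatio]
    push_cast
    field_simp
  have lower_term : meanRatio (n - 1) * sqrtRescale w (n - 1)
      = (n - 1 / 2) * w (n - 1) / (√(n : ℝ) : ℂ) := by
    rw [sqrtRescale, meanRatio, sub_add_cancel]
    push_cast
    field_simp
    ring
  rw [mul_assoc 2, symbol_term, upper_term, lower_term, degenerateOp]
  ring

theorem norm_sqrtRescale_recurrence_le (hα : 1 ≤ |α|) (Λ : ℂ) (w : ℤ → ℂ) (hn : 2 ≤ n) :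
    ‖sqrtRescale w (n + 1) - 2 * (α⁻¹ : ℝ) * sqrtRescale w n + sqrtRescale w (n - 1)‖
      ≤ (2 * ‖Λ‖ + 1) / (n : ℝ) ^ 2 * (‖sqrtRescale w n‖ + ‖sqrtRescale w (n - 1)‖)
        + ‖degenerateOp α Λ w n‖ / √(n : ℝ) := by
  have hn' : (2 : ℝ) ≤ n := by exact_mod_cast hn
  have hn₀ : (0 : ℝ) < n := by linarith
  have hσ : ‖((n : ℂ) ^ 2 - Λ) ^ ((1 : ℂ) / 2) / n - 1‖ ≤ ‖Λ‖ / (n : ℝ) ^ 2 := by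
    have h := norm_sq_sub_cpow_half_sub_le Λ hn₀
    rw [ofReal_intCast] at h
    have hnC : (n : ℂ) ≠ 0 := by exact_mod_cast hn₀.ne'
    rw [div_sub_one hnC, norm_div, norm_intCast, abs_of_pos hn₀, sq (n : ℝ), ← div_div]
    gcongr
  have hp : meanRatio n ≤ 1 + 1 / (4 * (n : ℝ) ^ 2) :=
    (meanRatio_le hn₀).trans
      (add_le_add_right (one_div_le_one_div_of_le (by positivity) (by nlinarith)) 1)
  have hq : meanRatio (n - 1) ≤ 1 + 1 / (4 * (n : ℝ) ^ 2) :=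
    (meanRatio_le (by linarith)).trans
      (add_le_add_right (one_div_le_one_div_of_le (by positivity) (by nlinarith)) 1)
  have h := norm_three_term_le hα (one_le_meanRatio hn₀) (one_le_meanRatio (by linarith)) hp hq hσ
    (degenerateOp_div_sqrt α Λ w hn)
  rw [norm_div, norm_real, Real.norm_of_nonneg (Real.sqrt_nonneg _)] at h
  refine h.trans (add_le_add_left (mul_le_mul_of_nonneg_right ?_ (by positivity)) _)
  calc 2 * (‖Λ‖ / (n : ℝ) ^ 2 + 1 / (4 * (n : ℝ) ^ 2))
      = (2 * ‖Λ‖ + 1 / 2) / (n : ℝ) ^ 2 := by field_simp; ring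
    _ ≤ (2 * ‖Λ‖ + 1) / (n : ℝ) ^ 2 := by gcongr; norm_num

lemma norm_sqrtRescale_natCast_recurrence_le (hα : 1 ≤ |α|) (Λ : ℂ) (w : ℤ → ℂ) (k : ℕ) :
    ‖sqrtRescale w (k + 2 + 1) - 2 * (α⁻¹ : ℝ) * sqrtRescale w (k + 1 + 1)
        + sqrtRescale w (k + 1)‖
      ≤ (2 * ‖Λ‖ + 1) / ((k + 2 : ℤ) : ℝ) ^ 2
          * (‖sqrtRescale w (k + 1 + 1)‖ + ‖sqrtRescale w (k + 1)‖)
        + ‖degenerateOp α Λ w (k + 2)‖ / √((k + 2 : ℤ) : ℝ) := by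
  have h := norm_sqrtRescale_recurrence_le hα Λ w (n := k + 2) (by omega)
  have prev_index : (k : ℤ) + 2 - 1 = k + 1 := by ring
  have mid_index : (k : ℤ) + 1 + 1 = k + 2 := by ring
  rw [prev_index] at h
  rwa [mid_index]

theorem exists_norm_sqrtRescale_le (hα : 1 < |α|) (Λ : ℂ) {δ : ℝ} (hδ : 0 < δ) :
    ∃ K : ℝ, 0 < K ∧ ∀ w : ℤ → ℂ, MemCircleSobolev δ (degenerateOp α Λ w) → ∀ k : ℕ,
      ‖sqrtRescale w (k + 1)‖ ≤ K * (‖sqrtRescale w 1‖ + ‖sqrtRescale w 2‖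
        + circleSobolevNorm δ (degenerateOp α Λ w)) := by
  obtain ⟨z, y, hz, hy, hzy, hadd, hmul⟩ := exists_norm_eq_one_add_eq_mul_eq_one
    (c := α⁻¹) (by rw [abs_inv]; exact inv_lt_one_of_one_lt₀ hα)
  set a : ℕ → ℝ := fun k ↦ (2 * ‖Λ‖ + 1) / ((k + 2 : ℤ) : ℝ) ^ 2
  have ha : Summable a := by
    have h := (summable_nat_add_iff 2).2 (Real.summable_one_div_nat_pow.2 one_lt_two)
    simpa [a, div_eq_mul_inv] using h.mul_left (2 * ‖Λ‖ + 1)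
  set Z : ℝ := ∑' n : ℤ, (1 + (n : ℝ) ^ 2) ^ (2 * (-(1 / 4)) - δ)
  set G : ℝ := 2 * Real.exp (4 / ‖z - y‖ * ∑' k, a k) / ‖z - y‖
  have hG : 0 < G := div_pos (by positivity) (norm_pos_iff.2 (sub_ne_zero.2 hzy))
  refine ⟨G * (1 + 2 * √Z), by positivity, fun w hw k ↦ ?_⟩
  set F := circleSobolevNorm δ (degenerateOp α Λ w)
  have hF : 0 ≤ F := circleSobolevNorm_nonneg _ _
  calc ‖sqrtRescale w (k + 1)‖
      ≤ G * (‖sqrtRescale w 1‖ + ‖sqrtRescale w 2‖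
        + ∑' j : ℕ, ‖degenerateOp α Λ w (j + 2)‖ / √((j + 2 : ℤ) : ℝ)) :=
        norm_le_of_perturbed_recurrence hz.le hy.le hzy (v := fun j ↦ sqrtRescale w (j + 1))
          (fun j ↦ by positivity) (fun j ↦ by positivity) ha (hw.summable_norm_div_sqrt hδ)
          (fun j ↦ by
            simpa [a, hadd, hmul] using norm_sqrtRescale_natCast_recurrence_le hα.le Λ w j) k
    _ ≤ G * (‖sqrtRescale w 1‖ + ‖sqrtRescale w 2‖ + 2 * √Z * F) := by
        gcongr
        exact hw.tsum_norm_div_sqrt_le hδ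
    _ ≤ G * ((1 + 2 * √Z) * (‖sqrtRescale w 1‖ + ‖sqrtRescale w 2‖ + F)) := by
        gcongr
        nlinarith [show 0 ≤ √Z * (‖sqrtRescale w 1‖ + ‖sqrtRescale w 2‖) by positivity]
    _ = _ := by ring

theorem exists_rpow_quarter_mul_norm_le_of_pos (hα : 1 < |α|) (Λ : ℂ) {δ : ℝ} (hδ : 0 < δ) :
    ∃ K : ℝ, 0 < K ∧ ∀ w : ℤ → ℂ, MemCircleSobolev δ (degenerateOp α Λ w) → ∀ n : ℤ, 0 < n →
      (1 + (n : ℝ) ^ 2) ^ (1 / 4 : ℝ) * ‖w n‖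
        ≤ K * (‖w 1‖ + ‖w 2‖ + circleSobolevNorm δ (degenerateOp α Λ w)) := by
  obtain ⟨K, hK, bound⟩ := exists_norm_sqrtRescale_le hα Λ hδ
  refine ⟨4 * K, by positivity, fun w hw n hn ↦ ?_⟩
  have hF := circleSobolevNorm_nonneg δ (degenerateOp α Λ w)
  have norm_rescale (m : ℤ) : ‖sqrtRescale w m‖ = √(m : ℝ) * ‖w m‖ := by
    rw [sqrtRescale, norm_mul, norm_real, Real.norm_of_nonneg (Real.sqrt_nonneg _)]
  have h₁ : ‖sqrtRescale w 1‖ = ‖w 1‖ := by simp [norm_rescale]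
  have h₂ : ‖sqrtRescale w 2‖ ≤ 2 * ‖w 2‖ := by
    rw [norm_rescale]
    gcongr
    exact Real.sqrt_le_iff.2 (by norm_num)
  have hk : ((n - 1).toNat : ℤ) + 1 = n := by omega
  calc (1 + (n : ℝ) ^ 2) ^ (1 / 4 : ℝ) * ‖w n‖ ≤ 2 * √(n : ℝ) * ‖w n‖ := by
        gcongr
        exact one_add_sq_rpow_quarter_le hn
    _ = 2 * ‖sqrtRescale w n‖ := by rw [norm_rescale, mul_assoc]
    _ ≤ 2 * (K * (‖sqrtRescale w 1‖ + ‖sqrtRescale w 2‖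
        + circleSobolevNorm δ (degenerateOp α Λ w))) := by
        gcongr
        simpa only [hk] using bound w hw (n - 1).toNat
    _ ≤ 2 * (K * (2 * (‖w 1‖ + ‖w 2‖ + circleSobolevNorm δ (degenerateOp α Λ w)))) := by
        gcongr
        linarith [norm_nonneg (w 1)]
    _ = _ := by ring

theorem exists_rpow_quarter_mul_norm_le (hα : 1 < |α|) (Λ : ℂ) {δ : ℝ} (hδ : 0 < δ) :
    ∃ K : ℝ, 0 < K ∧ ∀ w : ℤ → ℂ, MemCircleSobolev δ (degenerateOp α Λ w) → ∀ n : ℤ,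
      (1 + (n : ℝ) ^ 2) ^ (1 / 4 : ℝ) * ‖w n‖
        ≤ K * (∑ j ∈ Finset.Icc (-2) 2, ‖w j‖ + circleSobolevNorm δ (degenerateOp α Λ w)) := by
  obtain ⟨K₁, hK₁, h₁⟩ := exists_rpow_quarter_mul_norm_le_of_pos hα Λ hδ
  obtain ⟨K₂, hK₂, h₂⟩ := exists_rpow_quarter_mul_norm_le_of_pos (α := -α) (by rwa [abs_neg]) Λ hδ
  refine ⟨K₁ + K₂ + 1, by positivity, fun w hw n ↦ ?_⟩
  have hF := circleSobolevNorm_nonneg δ (degenerateOp α Λ w)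
  have expand : ∑ j ∈ Finset.Icc (-2) 2, ‖w j‖
      = ‖w (-2)‖ + ‖w (-1)‖ + ‖w 0‖ + ‖w 1‖ + ‖w 2‖ := by
    rw [show Finset.Icc (-2 : ℤ) 2 = {-2, -1, 0, 1, 2} from rfl]
    iterate 4 rw [Finset.sum_insert (by decide)]
    rw [Finset.sum_singleton]
    ring
  rw [expand]
  rcases lt_trichotomy n 0 with hn | rfl | hn
  · have h := h₂ (fun n ↦ w (-n)) (by rw [degenerateOp_comp_neg]; exact hw.comp_neg) (-n) (by omega)
    rw [degenerateOp_comp_neg, circleSobolevNorm_comp_neg δ (degenerateOp α Λ w)] at h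
    simp only [neg_neg, Int.cast_neg, neg_sq] at h
    refine h.trans ?_
    gcongr ?_ * ?_
    · linarith
    · linarith [norm_nonneg (w 0), norm_nonneg (w 1), norm_nonneg (w 2)]
  · have h₀ : (1 + ((0 : ℤ) : ℝ) ^ 2) ^ (1 / 4 : ℝ) = 1 := by simp
    rw [h₀]
    gcongr ?_ * ?_
    · linarith
    · linarith [norm_nonneg (w (-2)), norm_nonneg (w (-1)), norm_nonneg (w 1), norm_nonneg (w 2)]
  · refine (h₁ w hw n hn).trans ?_
    gcongr ?_ * ?_
    · linarith
    · linarith [norm_nonneg (w 0), norm_nonneg (w (-1)), norm_nonneg (w (-2))]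

end Operator

theorem apriori_estimate_general {α : ℝ} (hα : 1 < |α|) (Λ : ℂ) {ε δ N : ℝ} (hε : 0 < ε)
    (hδ : 0 < δ) (hN : 0 < N) :
    ∃ C C' : ℝ, 0 < C ∧ 0 < C' ∧ ∀ w : ℤ → ℂ, MemCircleSobolev δ (degenerateOp α Λ w) →
      MemCircleSobolev (-ε) w ∧ circleSobolevNorm (-ε) w
        ≤ C * circleSobolevNorm δ (degenerateOp α Λ w) + C' * circleSobolevNorm (-N) w := by
  obtain ⟨K, hK, decay⟩ := exists_rpow_quarter_mul_norm_le hα Λ hδ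
  set S : ℝ := ∑ j ∈ Finset.Icc (-2 : ℤ) 2, (1 + (j : ℝ) ^ 2) ^ (-(-N) / 2)
  have hS : 0 < S := Finset.sum_pos (fun j _ ↦ by positivity) ⟨0, by simp⟩
  have exponent_lt {r : ℝ} (hr : 0 < r) : -r - 2 * (1 / 4) < -(1 / 2) := by linarith
  set Z : ℝ := ∑' n : ℤ, (1 + (n : ℝ) ^ 2) ^ (-ε - 2 * (1 / 4))
  have hZ : 0 < Z := (summable_one_add_sq_rpow (exponent_lt hε)).tsum_pos
    (fun n ↦ by positivity) 0 (by positivity)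
  refine ⟨√Z * K, √Z * K * S, by positivity, by positivity, fun w hw ↦
    ⟨memCircleSobolev_of_decay (decay w hw) (exponent_lt hε), ?_⟩⟩
  have hwN : MemCircleSobolev (-N) w := memCircleSobolev_of_decay (decay w hw) (exponent_lt hN)
  set F := circleSobolevNorm δ (degenerateOp α Λ w)
  calc circleSobolevNorm (-ε) w ≤ √Z * (K * (∑ j ∈ Finset.Icc (-2) 2, ‖w j‖ + F)) :=
        circleSobolevNorm_le_of_decay (decay w hw) (exponent_lt hε)
    _ ≤ √Z * (K * (S * circleSobolevNorm (-N) w + F)) := by gcongr; exact hwN.sum_norm_le _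
    _ = _ := by ring

/-- Lemma 6.1 in Fourier coefficients: for `α > 1`, `Λ ∈ ℂ \ [0,∞)` and `ε > 0`
there are constants `C, C' > 0` such that for every `w ∈ H^{-1/2}` with
`f_n = 2√(n²-Λ) w_n - α((n+1/2)w_{n+1} + (n-1/2)w_{n-1})` in `H^{1/2}` one has
`w ∈ H^{-ε}` and `‖w‖_{H^{-ε}} ≤ C ‖f‖_{H^{1/2}} + C' ‖w‖_{H^{-1/2}}`. -/
theorem apriori_estimate (α : ℝ) (hα : 1 < α)
    (Λ : ℂ) (hΛ : ∀ t : ℝ, 0 ≤ t → Λ ≠ (t : ℂ)) (ε : ℝ) (hε : 0 < ε) :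
    ∃ C C' : ℝ, 0 < C ∧ 0 < C' ∧
      ∀ w f : ℤ → ℂ,
        (∀ n : ℤ, f n = 2 * (((n : ℂ) ^ 2 - Λ) ^ ((1 : ℂ) / 2)) * w n
            - (α : ℂ) * (((n : ℂ) + 1 / 2) * w (n + 1) + ((n : ℂ) - 1 / 2) * w (n - 1))) →
        (Summable fun n : ℤ => (1 + (n : ℝ) ^ 2) ^ (-(1 / 2 : ℝ)) * ‖w n‖ ^ 2) →
        (Summable fun n : ℤ => (1 + (n : ℝ) ^ 2) ^ ((1 / 2 : ℝ)) * ‖f n‖ ^ 2) →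
        (Summable fun n : ℤ => (1 + (n : ℝ) ^ 2) ^ (-ε) * ‖w n‖ ^ 2) ∧
          Real.sqrt (∑' n : ℤ, (1 + (n : ℝ) ^ 2) ^ (-ε) * ‖w n‖ ^ 2)
            ≤ C * Real.sqrt (∑' n : ℤ, (1 + (n : ℝ) ^ 2) ^ ((1 / 2 : ℝ)) * ‖f n‖ ^ 2)
              + C' * Real.sqrt (∑' n : ℤ, (1 + (n : ℝ) ^ 2) ^ (-(1 / 2 : ℝ)) * ‖w n‖ ^ 2) := by
  obtain ⟨C, C', hC, hC', estimate⟩ := apriori_estimate_general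
    (hα.trans_le (le_abs_self α)) Λ hε one_half_pos one_half_pos
  exact ⟨C, C', hC, hC', fun w f hf _ hfs ↦ by obtain rfl := funext hf; exact estimate w hfs⟩
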